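/- Let H be a finite dimensional quasi-bialgebra over a field k and (𝔄, ρ, Φ_ρ) a right H-comodule algebra. Then the vector space 𝔄⊗H*, with multiplication (a #̄ φ)(a' #̄ ψ) = ∑ a a'⟨0⟩ x̃¹_ρ #̄ (φ ↼ a'⟨1⟩ x̃²_ρ)(ψ ↼ x̃³_ρ) (where Φ_ρ⁻¹ = ∑x̃¹_ρ⊗x̃²_ρ⊗x̃³_ρ and ρ(a') = ∑a'⟨0⟩⊗a'⟨1⟩), unit 1_𝔄 #̄ ε, and left H-action h·(a #̄ φ) = a #̄ (h ⇀ φ), is a left H-module algebra (the quasi-smash product 𝔄 #̄ H*). -/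

import Mathlib

open TensorProduct Finset

noncomputable section

/-- A quasi-bialgebra in the sense of Drinfeld, together with chosen finite
Sweedler-type families representing the comultiplication and the reassociator. -/
structure QuasiBialgebra (k : Type*) [Field k] (H : Type*) [Ring H] [Algebra k H] where
  comul : H →ₐ[k] H ⊗[k] H
  counit : H →ₐ[k] k
  nD : ℕ
  D1 : H → ℕ → H
  D2 : H → ℕ → H
  hcomul : ∀ h, comul h = ∑ i ∈ range nD, D1 h i ⊗ₜ[k] D2 h i
  nP : ℕ
  X1 : ℕ → H
  X2 : ℕ → H
  X3 : ℕ → H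
  nQ : ℕ
  x1 : ℕ → H
  x2 : ℕ → H
  x3 : ℕ → H
  P_inv : ∑ s ∈ range nP, ∑ q ∈ range nQ,
      (X1 s * x1 q) ⊗ₜ[k] ((X2 s * x2 q) ⊗ₜ[k] (X3 s * x3 q)) =
      (1 : H) ⊗ₜ[k] ((1 : H) ⊗ₜ[k] (1 : H))
  inv_P : ∑ q ∈ range nQ, ∑ s ∈ range nP,
      (x1 q * X1 s) ⊗ₜ[k] ((x2 q * X2 s) ⊗ₜ[k] (x3 q * X3 s)) =
      (1 : H) ⊗ₜ[k] ((1 : H) ⊗ₜ[k] (1 : H))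
  coassoc : ∀ h : H,
    ∑ i ∈ range nD, ∑ j ∈ range nD,
      D1 h i ⊗ₜ[k] (D1 (D2 h i) j ⊗ₜ[k] D2 (D2 h i) j) =
    ∑ s ∈ range nP, ∑ i ∈ range nD, ∑ j ∈ range nD, ∑ q ∈ range nQ,
      (X1 s * D1 (D1 h i) j * x1 q) ⊗ₜ[k]
        ((X2 s * D2 (D1 h i) j * x2 q) ⊗ₜ[k] (X3 s * D2 h i * x3 q))
  counit_r : ∀ h : H, ∑ i ∈ range nD, counit (D2 h i) • D1 h i = h
  counit_l : ∀ h : H, ∑ i ∈ range nD, counit (D1 h i) • D2 h i = h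
  pentagon :
    ∑ p ∈ range nP, ∑ s ∈ range nP, ∑ l ∈ range nD, ∑ r ∈ range nP,
      (X1 s * X1 r) ⊗ₜ[k] ((X1 p * D1 (X2 s) l * X2 r) ⊗ₜ[k]
        ((X2 p * D2 (X2 s) l * X3 r) ⊗ₜ[k] (X3 p * X3 s))) =
    ∑ p ∈ range nP, ∑ s ∈ range nP, ∑ l ∈ range nD, ∑ j ∈ range nD,
      (X1 p * D1 (X1 s) j) ⊗ₜ[k] ((X2 p * D2 (X1 s) j) ⊗ₜ[k]
        ((D1 (X3 p) l * X2 s) ⊗ₜ[k] (D2 (X3 p) l * X3 s)))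
  normal : ∑ s ∈ range nP, counit (X2 s) • (X1 s ⊗ₜ[k] X3 s) = (1 : H) ⊗ₜ[k] (1 : H)

/-- A quasi-Hopf algebra: a quasi-bialgebra with an anti-automorphism `S`
and elements `aE = α`, `bE = β` satisfying the antipode axioms. -/
structure QuasiHopfAlgebra (k : Type*) [Field k] (H : Type*) [Ring H] [Algebra k H]
    extends QuasiBialgebra k H where
  S : H →ₗ[k] H
  Sinv : H →ₗ[k] H
  S_Sinv : ∀ h, S (Sinv h) = h
  Sinv_S : ∀ h, Sinv (S h) = h
  S_one : S 1 = 1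
  S_mul : ∀ g h : H, S (g * h) = S h * S g
  aE : H
  bE : H
  antip_l : ∀ h, ∑ i ∈ range nD, S (D1 h i) * aE * D2 h i = counit h • aE
  antip_r : ∀ h, ∑ i ∈ range nD, D1 h i * bE * S (D2 h i) = counit h • bE
  antip_X : ∑ s ∈ range nP, X1 s * bE * S (X2 s) * aE * X3 s = 1
  antip_x : ∑ q ∈ range nQ, S (x1 q) * aE * x2 q * bE * S (x3 q) = 1

/-- The Drinfeld twist `f` of a quasi-Hopf algebra, given by families `f₁ ⊗ f₂`
with inverse `g₁ ⊗ g₂`, together with its defining formula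
`f = ∑ (S⊗S)(Δᵒᵖ(x¹)) γ Δ(x²βS(x³))`, `γ = ∑ S(A²)αA³ ⊗ S(A¹)αA⁴`,
`∑A¹⊗A²⊗A³⊗A⁴ = (Φ⊗1)(Δ⊗id⊗id)(Φ⁻¹)`. -/
structure DrinfeldTwist {k : Type*} [Field k] {H : Type*} [Ring H] [Algebra k H]
    (QH : QuasiHopfAlgebra k H) where
  nf : ℕ
  f1 : ℕ → H
  f2 : ℕ → H
  g1 : ℕ → H
  g2 : ℕ → H
  f_inv : ∑ t ∈ range nf, ∑ u ∈ range nf,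
      (f1 t * g1 u) ⊗ₜ[k] (f2 t * g2 u) = (1 : H) ⊗ₜ[k] (1 : H)
  inv_f : ∑ u ∈ range nf, ∑ t ∈ range nf,
      (g1 u * f1 t) ⊗ₜ[k] (g2 u * f2 t) = (1 : H) ⊗ₜ[k] (1 : H)
  h_f : ∑ t ∈ range nf, f1 t ⊗ₜ[k] f2 t =
    ∑ j ∈ range QH.nQ, ∑ l ∈ range QH.nD, ∑ p ∈ range QH.nP, ∑ j' ∈ range QH.nQ,
      ∑ l' ∈ range QH.nD, ∑ l'' ∈ range QH.nD,
      (QH.S (QH.D2 (QH.x1 j) l) *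
          (QH.S (QH.X2 p * QH.D2 (QH.x1 j') l') * QH.aE * (QH.X3 p * QH.x2 j')) *
          QH.D1 (QH.x2 j * QH.bE * QH.S (QH.x3 j)) l'') ⊗ₜ[k]
        (QH.S (QH.D1 (QH.x1 j) l) *
          (QH.S (QH.X1 p * QH.D1 (QH.x1 j') l') * QH.aE * QH.x3 j') *
          QH.D2 (QH.x2 j * QH.bE * QH.S (QH.x3 j)) l'')

/-- A right `H`-comodule algebra over a quasi-bialgebra, with Sweedler families. -/
structure RightComoduleAlgebra {k : Type*} [Field k] {H : Type*} [Ring H] [Algebra k H]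
    (QB : QuasiBialgebra k H) (A : Type*) [Ring A] [Algebra k A] where
  rho : A →ₐ[k] A ⊗[k] H
  nR : ℕ
  r0 : A → ℕ → A
  r1 : A → ℕ → H
  hrho : ∀ a, rho a = ∑ i ∈ range nR, r0 a i ⊗ₜ[k] r1 a i
  nP : ℕ
  P1 : ℕ → A
  P2 : ℕ → H
  P3 : ℕ → H
  nQ : ℕ
  Q1 : ℕ → A
  Q2 : ℕ → H
  Q3 : ℕ → H
  P_inv : ∑ s ∈ range nP, ∑ q ∈ range nQ,
      (P1 s * Q1 q) ⊗ₜ[k] ((P2 s * Q2 q) ⊗ₜ[k] (P3 s * Q3 q)) =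
      (1 : A) ⊗ₜ[k] ((1 : H) ⊗ₜ[k] (1 : H))
  inv_P : ∑ q ∈ range nQ, ∑ s ∈ range nP,
      (Q1 q * P1 s) ⊗ₜ[k] ((Q2 q * P2 s) ⊗ₜ[k] (Q3 q * P3 s)) =
      (1 : A) ⊗ₜ[k] ((1 : H) ⊗ₜ[k] (1 : H))
  rca1 : ∀ a : A,
    ∑ s ∈ range nP, ∑ i ∈ range nR, ∑ j ∈ range nR,
      (P1 s * r0 (r0 a i) j) ⊗ₜ[k] ((P2 s * r1 (r0 a i) j) ⊗ₜ[k] (P3 s * r1 a i)) =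
    ∑ i ∈ range nR, ∑ l ∈ range QB.nD, ∑ s ∈ range nP,
      (r0 a i * P1 s) ⊗ₜ[k] ((QB.D1 (r1 a i) l * P2 s) ⊗ₜ[k] (QB.D2 (r1 a i) l * P3 s))
  rca2 :
    ∑ s ∈ range QB.nP, ∑ i ∈ range nP, ∑ l ∈ range QB.nD, ∑ j ∈ range nP,
      (P1 i * P1 j) ⊗ₜ[k] ((QB.X1 s * QB.D1 (P2 i) l * P2 j) ⊗ₜ[k]
        ((QB.X2 s * QB.D2 (P2 i) l * P3 j) ⊗ₜ[k] (QB.X3 s * P3 i))) =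
    ∑ i ∈ range nP, ∑ l ∈ range QB.nD, ∑ j ∈ range nP, ∑ u ∈ range nR,
      (P1 i * r0 (P1 j) u) ⊗ₜ[k] ((P2 i * r1 (P1 j) u) ⊗ₜ[k]
        ((QB.D1 (P3 i) l * P2 j) ⊗ₜ[k] (QB.D2 (P3 i) l * P3 j)))
  rca3 : ∀ a, ∑ i ∈ range nR, QB.counit (r1 a i) • r0 a i = a
  rca4a : ∑ s ∈ range nP, QB.counit (P2 s) • (P1 s ⊗ₜ[k] P3 s) = (1 : A) ⊗ₜ[k] (1 : H)
  rca4b : ∑ s ∈ range nP, QB.counit (P3 s) • (P1 s ⊗ₜ[k] P2 s) = (1 : A) ⊗ₜ[k] (1 : H)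

/-- A left `H`-comodule algebra over a quasi-bialgebra, with Sweedler families. -/
structure LeftComoduleAlgebra {k : Type*} [Field k] {H : Type*} [Ring H] [Algebra k H]
    (QB : QuasiBialgebra k H) (B : Type*) [Ring B] [Algebra k B] where
  lam : B →ₐ[k] H ⊗[k] B
  nL : ℕ
  l1 : B → ℕ → H
  l0 : B → ℕ → B
  hlam : ∀ b, lam b = ∑ i ∈ range nL, l1 b i ⊗ₜ[k] l0 b i
  nP : ℕ
  P1 : ℕ → H
  P2 : ℕ → H
  P3 : ℕ → B
  nQ : ℕ
  Q1 : ℕ → H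
  Q2 : ℕ → H
  Q3 : ℕ → B
  P_inv : ∑ s ∈ range nP, ∑ q ∈ range nQ,
      (P1 s * Q1 q) ⊗ₜ[k] ((P2 s * Q2 q) ⊗ₜ[k] (P3 s * Q3 q)) =
      (1 : H) ⊗ₜ[k] ((1 : H) ⊗ₜ[k] (1 : B))
  inv_P : ∑ q ∈ range nQ, ∑ s ∈ range nP,
      (Q1 q * P1 s) ⊗ₜ[k] ((Q2 q * P2 s) ⊗ₜ[k] (Q3 q * P3 s)) =
      (1 : H) ⊗ₜ[k] ((1 : H) ⊗ₜ[k] (1 : B))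
  lca1 : ∀ b : B,
    ∑ i ∈ range nL, ∑ l ∈ range nL, ∑ s ∈ range nP,
      (l1 b i * P1 s) ⊗ₜ[k] ((l1 (l0 b i) l * P2 s) ⊗ₜ[k] (l0 (l0 b i) l * P3 s)) =
    ∑ s ∈ range nP, ∑ i ∈ range nL, ∑ l ∈ range QB.nD,
      (P1 s * QB.D1 (l1 b i) l) ⊗ₜ[k] ((P2 s * QB.D2 (l1 b i) l) ⊗ₜ[k] (P3 s * l0 b i))
  lca2 :
    ∑ p ∈ range nP, ∑ s ∈ range nP, ∑ l ∈ range QB.nD, ∑ r ∈ range QB.nP,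
      (P1 s * QB.X1 r) ⊗ₜ[k] ((P1 p * QB.D1 (P2 s) l * QB.X2 r) ⊗ₜ[k]
        ((P2 p * QB.D2 (P2 s) l * QB.X3 r) ⊗ₜ[k] (P3 p * P3 s))) =
    ∑ p ∈ range nP, ∑ s ∈ range nP, ∑ j ∈ range QB.nD, ∑ l ∈ range nL,
      (P1 p * QB.D1 (P1 s) j) ⊗ₜ[k] ((P2 p * QB.D2 (P1 s) j) ⊗ₜ[k]
        ((l1 (P3 p) l * P2 s) ⊗ₜ[k] (l0 (P3 p) l * P3 s)))
  lca3 : ∀ b, ∑ i ∈ range nL, QB.counit (l1 b i) • l0 b i = b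
  lca4a : ∑ s ∈ range nP, QB.counit (P2 s) • (P1 s ⊗ₜ[k] P3 s) = (1 : H) ⊗ₜ[k] (1 : B)
  lca4b : ∑ s ∈ range nP, QB.counit (P1 s) • (P2 s ⊗ₜ[k] P3 s) = (1 : H) ⊗ₜ[k] (1 : B)

/-- An algebra in the monoidal category of left `H`-modules
(a left `H`-module algebra), on a carrier `V`. -/
structure LeftModuleAlgebra {k : Type*} [Field k] {H : Type*} [Ring H] [Algebra k H]
    (QB : QuasiBialgebra k H) (V : Type*) [AddCommMonoid V] [Module k V] where
  mul : V →ₗ[k] V →ₗ[k] V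
  one : V
  act : H →ₗ[k] V →ₗ[k] V
  act_one : ∀ v, act 1 v = v
  act_mul : ∀ g h v, act (g * h) v = act g (act h v)
  mul_one : ∀ v, mul v one = v
  one_mul : ∀ v, mul one v = v
  mul_assoc : ∀ u v w, mul (mul u v) w =
    ∑ s ∈ range QB.nP, mul (act (QB.X1 s) u) (mul (act (QB.X2 s) v) (act (QB.X3 s) w))
  act_mul_mul : ∀ h u v, act h (mul u v) =
    ∑ i ∈ range QB.nD, mul (act (QB.D1 h i) u) (act (QB.D2 h i) v)
  act_unit : ∀ h, act h one = QB.counit h • one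

/-- The right action `φ ↦ h ⇀ φ`, `(h ⇀ φ)(h') = φ(h'h)`. -/
def rA (k : Type*) [Field k] {H : Type*} [Ring H] [Algebra k H] (h : H) :
    Module.Dual k H →ₗ[k] Module.Dual k H :=
  LinearMap.lcomp k k (LinearMap.mulRight k h)

/-- The left action `φ ↦ φ ↼ h`, `(φ ↼ h)(h') = φ(hh')`. -/
def lA (k : Type*) [Field k] {H : Type*} [Ring H] [Algebra k H] (h : H) :
    Module.Dual k H →ₗ[k] Module.Dual k H :=
  LinearMap.lcomp k k (LinearMap.mulLeft k h)

/-- Convolution product on the dual of a "coalgebra" with comultiplication `DC`. -/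
def convC {k : Type*} [Field k] {C : Type*} [AddCommGroup C] [Module k C]
    (DC : C →ₗ[k] C ⊗[k] C) (φ ψ : Module.Dual k C) : Module.Dual k C :=
  (TensorProduct.lid k k).toLinearMap ∘ₗ (TensorProduct.map φ ψ) ∘ₗ DC

/-- A two-sided `(𝔄, H)`-Hopf module. -/
structure TwoSidedHopfModule {k : Type*} [Field k] {H : Type*} [Ring H] [Algebra k H]
    (QB : QuasiBialgebra k H) {A : Type*} [Ring A] [Algebra k A]
    (CA : RightComoduleAlgebra QB A) (M : Type*) [AddCommGroup M] [Module k M] where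
  ha : H →ₗ[k] M →ₗ[k] M
  ha_one : ∀ m, ha 1 m = m
  ha_mul : ∀ g h m, ha (g * h) m = ha g (ha h m)
  ra : A →ₗ[k] M →ₗ[k] M
  ra_one : ∀ m, ra 1 m = m
  ra_mul : ∀ a b m, ra (a * b) m = ra b (ra a m)
  ha_ra : ∀ h a m, ha h (ra a m) = ra a (ha h m)
  rho : M →ₗ[k] M ⊗[k] H
  counit_rho : ∀ m,
    (TensorProduct.rid k M) ((TensorProduct.map LinearMap.id QB.counit.toLinearMap) (rho m)) = m
  coassoc_rho : ∀ m,
    ∑ s ∈ range QB.nP,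
      (TensorProduct.map (ha (QB.X1 s))
        (TensorProduct.map (LinearMap.mulLeft k (QB.X2 s)) (LinearMap.mulLeft k (QB.X3 s))))
        ((TensorProduct.assoc k M H H) ((TensorProduct.map rho LinearMap.id) (rho m))) =
    ∑ j ∈ range CA.nP,
      (TensorProduct.map (ra (CA.P1 j))
        (TensorProduct.map (LinearMap.mulRight k (CA.P2 j)) (LinearMap.mulRight k (CA.P3 j))))
        ((TensorProduct.map LinearMap.id QB.comul.toLinearMap) (rho m))
  colin_l : ∀ h m, rho (ha h m) =
    ∑ i ∈ range QB.nD,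
      (TensorProduct.map (ha (QB.D1 h i)) (LinearMap.mulLeft k (QB.D2 h i))) (rho m)
  colin_r : ∀ a m, rho (ra a m) =
    ∑ i ∈ range CA.nR,
      (TensorProduct.map (ra (CA.r0 a i)) (LinearMap.mulRight k (CA.r1 a i))) (rho m)

/-- A right `(H^*, A)`-Hopf module over a left `H`-module algebra `A` (carrier `V`). -/
structure RelHopfModule {k : Type*} [Field k] {H : Type*} [Ring H] [Algebra k H]
    (QB : QuasiBialgebra k H) {V : Type*} [AddCommMonoid V] [Module k V]
    (MA : LeftModuleAlgebra QB V) (M : Type*) [AddCommGroup M] [Module k M] where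
  hb : H →ₗ[k] M →ₗ[k] M
  hb_one : ∀ m, hb 1 m = m
  hb_mul : ∀ g h m, hb (g * h) m = hb g (hb h m)
  rb : V →ₗ[k] M →ₗ[k] M
  rb_one : ∀ m, rb MA.one m = m
  rb_assoc : ∀ m u v, rb v (rb u m) =
    ∑ s ∈ range QB.nP, rb (MA.mul (MA.act (QB.X2 s) u) (MA.act (QB.X3 s) v)) (hb (QB.X1 s) m)
  hb_rb : ∀ h u m, hb h (rb u m) =
    ∑ i ∈ range QB.nD, rb (MA.act (QB.D2 h i) u) (hb (QB.D1 h i) m)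

/-- A right module over the (possibly nonassociative) algebra `(V, mul, one)`. -/
structure RightAlgModule (k : Type*) [Field k] {V : Type*} [AddCommMonoid V] [Module k V]
    (mul : V →ₗ[k] V →ₗ[k] V) (one : V) (N : Type*) [AddCommGroup N] [Module k N] where
  ract : V →ₗ[k] N →ₗ[k] N
  ract_one : ∀ n, ract one n = n
  ract_mul : ∀ u v n, ract (mul u v) n = ract v (ract u n)

/-- A left `H'`-comodule algebra structure on a carrier `V` equipped with a
(bilinear, possibly nonassociative) multiplication `mulV` and unit `oneV`. -/
structure LeftComoduleAlgebraS {k : Type*} [Field k] {H' : Type*} [Ring H'] [Algebra k H']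
    (QB : QuasiBialgebra k H') (V : Type*) [AddCommMonoid V] [Module k V]
    (mulV : V →ₗ[k] V →ₗ[k] V) (oneV : V) where
  lam : V →ₗ[k] H' ⊗[k] V
  nL : ℕ
  l1 : V → ℕ → H'
  l0 : V → ℕ → V
  hlam : ∀ v, lam v = ∑ i ∈ range nL, l1 v i ⊗ₜ[k] l0 v i
  lam_one : lam oneV = (1 : H') ⊗ₜ[k] oneV
  lam_mul : ∀ u v, lam (mulV u v) =
    ∑ i ∈ range nL, ∑ j ∈ range nL, (l1 u i * l1 v j) ⊗ₜ[k] mulV (l0 u i) (l0 v j)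
  nP : ℕ
  P1 : ℕ → H'
  P2 : ℕ → H'
  P3 : ℕ → V
  nQ : ℕ
  Q1 : ℕ → H'
  Q2 : ℕ → H'
  Q3 : ℕ → V
  P_inv : ∑ s ∈ range nP, ∑ q ∈ range nQ,
      (P1 s * Q1 q) ⊗ₜ[k] ((P2 s * Q2 q) ⊗ₜ[k] mulV (P3 s) (Q3 q)) =
      (1 : H') ⊗ₜ[k] ((1 : H') ⊗ₜ[k] oneV)
  inv_P : ∑ q ∈ range nQ, ∑ s ∈ range nP,
      (Q1 q * P1 s) ⊗ₜ[k] ((Q2 q * P2 s) ⊗ₜ[k] mulV (Q3 q) (P3 s)) =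
      (1 : H') ⊗ₜ[k] ((1 : H') ⊗ₜ[k] oneV)
  lca1 : ∀ v : V,
    ∑ i ∈ range nL, ∑ l ∈ range nL, ∑ s ∈ range nP,
      (l1 v i * P1 s) ⊗ₜ[k] ((l1 (l0 v i) l * P2 s) ⊗ₜ[k] mulV (l0 (l0 v i) l) (P3 s)) =
    ∑ s ∈ range nP, ∑ i ∈ range nL, ∑ l ∈ range QB.nD,
      (P1 s * QB.D1 (l1 v i) l) ⊗ₜ[k] ((P2 s * QB.D2 (l1 v i) l) ⊗ₜ[k] mulV (P3 s) (l0 v i))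
  lca2 :
    ∑ p ∈ range nP, ∑ s ∈ range nP, ∑ l ∈ range QB.nD, ∑ r ∈ range QB.nP,
      (P1 s * QB.X1 r) ⊗ₜ[k] ((P1 p * QB.D1 (P2 s) l * QB.X2 r) ⊗ₜ[k]
        ((P2 p * QB.D2 (P2 s) l * QB.X3 r) ⊗ₜ[k] mulV (P3 p) (P3 s))) =
    ∑ p ∈ range nP, ∑ s ∈ range nP, ∑ j ∈ range QB.nD, ∑ l ∈ range nL,
      (P1 p * QB.D1 (P1 s) j) ⊗ₜ[k] ((P2 p * QB.D2 (P1 s) j) ⊗ₜ[k]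
        ((l1 (P3 p) l * P2 s) ⊗ₜ[k] mulV (l0 (P3 p) l) (P3 s)))
  lca3 : ∀ v, ∑ i ∈ range nL, QB.counit (l1 v i) • l0 v i = v
  lca4a : ∑ s ∈ range nP, QB.counit (P2 s) • (P1 s ⊗ₜ[k] P3 s) = (1 : H') ⊗ₜ[k] oneV
  lca4b : ∑ s ∈ range nP, QB.counit (P1 s) • (P2 s ⊗ₜ[k] P3 s) = (1 : H') ⊗ₜ[k] oneV

/-- A right-left Doi-Hopf module over the quasi-bialgebra `QB'`, a left comodule
algebra (given by its carrier `V`, multiplication data and coaction families) and a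
module coalgebra `C` (given by its comultiplication `DC`, counit `eC` and right
`H'`-action `actC`). -/
structure DoiHopfModule {k : Type*} [Field k] {H' : Type*} [Ring H'] [Algebra k H']
    (QB' : QuasiBialgebra k H') {V : Type*} [AddCommMonoid V] [Module k V]
    (mulV : V →ₗ[k] V →ₗ[k] V) (oneV : V)
    (nL : ℕ) (l1 : V → ℕ → H') (l0 : V → ℕ → V)
    (nPl : ℕ) (Pl1 Pl2 : ℕ → H') (Pl3 : ℕ → V)
    {C : Type*} [AddCommGroup C] [Module k C]
    (DC : C →ₗ[k] C ⊗[k] C) (eC : C →ₗ[k] k) (actC : H' →ₗ[k] C →ₗ[k] C)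
    (N : Type*) [AddCommGroup N] [Module k N] where
  ract : V →ₗ[k] N →ₗ[k] N
  ract_one : ∀ n, ract oneV n = n
  ract_mul : ∀ u v n, ract (mulV u v) n = ract v (ract u n)
  rhoN : N →ₗ[k] C ⊗[k] N
  dh2 : ∀ n, (TensorProduct.lid k N) ((TensorProduct.map eC LinearMap.id) (rhoN n)) = n
  dh1 : ∀ n,
    (TensorProduct.assoc k C C N) ((TensorProduct.map DC LinearMap.id) (rhoN n)) =
    ∑ j ∈ range nPl,
      (TensorProduct.map (actC (Pl1 j)) (TensorProduct.map (actC (Pl2 j)) (ract (Pl3 j))))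
        ((TensorProduct.map LinearMap.id rhoN) (rhoN n))
  dh3 : ∀ v n, rhoN (ract v n) =
    ∑ w ∈ range nL, (TensorProduct.map (actC (l1 v w)) (ract (l0 v w))) (rhoN n)

/-- A right `H`-module coalgebra, with Sweedler families for the comultiplication. -/
structure RightModuleCoalgebra {k : Type*} [Field k] {H : Type*} [Ring H] [Algebra k H]
    (QB : QuasiBialgebra k H) (C : Type*) [AddCommGroup C] [Module k C] where
  act : H →ₗ[k] C →ₗ[k] C
  act_one : ∀ c, act 1 c = c
  act_mul : ∀ g h c, act (g * h) c = act h (act g c)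
  DC : C →ₗ[k] C ⊗[k] C
  nC : ℕ
  C1 : C → ℕ → C
  C2 : C → ℕ → C
  hDC : ∀ c, DC c = ∑ i ∈ range nC, C1 c i ⊗ₜ[k] C2 c i
  eC : C →ₗ[k] k
  counit_l : ∀ c, ∑ i ∈ range nC, eC (C1 c i) • C2 c i = c
  counit_r : ∀ c, ∑ i ∈ range nC, eC (C2 c i) • C1 c i = c
  rmc1 : ∀ c : C,
    ∑ i ∈ range nC, ∑ j ∈ range nC, ∑ q ∈ range QB.nQ,
      act (QB.x1 q) (C1 (C1 c i) j) ⊗ₜ[k]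
        (act (QB.x2 q) (C2 (C1 c i) j) ⊗ₜ[k] act (QB.x3 q) (C2 c i)) =
    ∑ i ∈ range nC, ∑ j ∈ range nC,
      C1 c i ⊗ₜ[k] (C1 (C2 c i) j ⊗ₜ[k] C2 (C2 c i) j)
  rmc2 : ∀ c h,
    ∑ i ∈ range nC, C1 (act h c) i ⊗ₜ[k] C2 (act h c) i =
    ∑ i ∈ range nC, ∑ l ∈ range QB.nD,
      act (QB.D1 h l) (C1 c i) ⊗ₜ[k] act (QB.D2 h l) (C2 c i)
  rmc3 : ∀ c h, eC (act h c) = eC c * QB.counit h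

/-- An `H`-bimodule coalgebra: a coalgebra in the monoidal category of
`(H,H)`-bimodules, with Sweedler families. -/
structure HBimoduleCoalgebra {k : Type*} [Field k] {H : Type*} [Ring H] [Algebra k H]
    (QB : QuasiBialgebra k H) (C : Type*) [AddCommGroup C] [Module k C] where
  lact : H →ₗ[k] C →ₗ[k] C
  lact_one : ∀ c, lact 1 c = c
  lact_mul : ∀ g h c, lact (g * h) c = lact g (lact h c)
  ract : H →ₗ[k] C →ₗ[k] C
  ract_one : ∀ c, ract 1 c = c
  ract_mul : ∀ g h c, ract (g * h) c = ract h (ract g c)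
  lact_ract : ∀ g h c, lact g (ract h c) = ract h (lact g c)
  DC : C →ₗ[k] C ⊗[k] C
  nC : ℕ
  C1 : C → ℕ → C
  C2 : C → ℕ → C
  hDC : ∀ c, DC c = ∑ i ∈ range nC, C1 c i ⊗ₜ[k] C2 c i
  eC : C →ₗ[k] k
  counit_l : ∀ c, ∑ i ∈ range nC, eC (C1 c i) • C2 c i = c
  counit_r : ∀ c, ∑ i ∈ range nC, eC (C2 c i) • C1 c i = c
  bmc1 : ∀ c : C,
    ∑ s ∈ range QB.nP, ∑ i ∈ range nC, ∑ j ∈ range nC, ∑ q ∈ range QB.nQ,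
      lact (QB.X1 s) (ract (QB.x1 q) (C1 (C1 c i) j)) ⊗ₜ[k]
        (lact (QB.X2 s) (ract (QB.x2 q) (C2 (C1 c i) j)) ⊗ₜ[k]
          lact (QB.X3 s) (ract (QB.x3 q) (C2 c i))) =
    ∑ i ∈ range nC, ∑ j ∈ range nC,
      C1 c i ⊗ₜ[k] (C1 (C2 c i) j ⊗ₜ[k] C2 (C2 c i) j)
  bmc2l : ∀ c h,
    ∑ i ∈ range nC, C1 (lact h c) i ⊗ₜ[k] C2 (lact h c) i =
    ∑ l ∈ range QB.nD, ∑ i ∈ range nC,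
      lact (QB.D1 h l) (C1 c i) ⊗ₜ[k] lact (QB.D2 h l) (C2 c i)
  bmc2r : ∀ c h,
    ∑ i ∈ range nC, C1 (ract h c) i ⊗ₜ[k] C2 (ract h c) i =
    ∑ l ∈ range QB.nD, ∑ i ∈ range nC,
      ract (QB.D1 h l) (C1 c i) ⊗ₜ[k] ract (QB.D2 h l) (C2 c i)
  bmc3l : ∀ c h, eC (lact h c) = QB.counit h * eC c
  bmc3r : ∀ c h, eC (ract h c) = eC c * QB.counit h

/-- An `H`-bicomodule algebra `(𝔸, λ, ρ, Φ_λ, Φ_ρ, Φ_{λ,ρ})`. -/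
structure BicomoduleAlgebra {k : Type*} [Field k] {H : Type*} [Ring H] [Algebra k H]
    (QB : QuasiBialgebra k H) (A : Type*) [Ring A] [Algebra k A] where
  rca : RightComoduleAlgebra QB A
  lca : LeftComoduleAlgebra QB A
  nO : ℕ
  O1 : ℕ → H
  O2 : ℕ → A
  O3 : ℕ → H
  nW : ℕ
  w1 : ℕ → H
  w2 : ℕ → A
  w3 : ℕ → H
  O_inv : ∑ v ∈ range nO, ∑ w ∈ range nW,
      (O1 v * w1 w) ⊗ₜ[k] ((O2 v * w2 w) ⊗ₜ[k] (O3 v * w3 w)) =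
      (1 : H) ⊗ₜ[k] ((1 : A) ⊗ₜ[k] (1 : H))
  inv_O : ∑ w ∈ range nW, ∑ v ∈ range nO,
      (w1 w * O1 v) ⊗ₜ[k] ((w2 w * O2 v) ⊗ₜ[k] (w3 w * O3 v)) =
      (1 : H) ⊗ₜ[k] ((1 : A) ⊗ₜ[k] (1 : H))
  bca1 : ∀ a : A,
    ∑ v ∈ range nO, ∑ r ∈ range rca.nR, ∑ l ∈ range lca.nL,
      (O1 v * lca.l1 (rca.r0 a r) l) ⊗ₜ[k]
        ((O2 v * lca.l0 (rca.r0 a r) l) ⊗ₜ[k] (O3 v * rca.r1 a r)) =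
    ∑ l ∈ range lca.nL, ∑ r ∈ range rca.nR, ∑ v ∈ range nO,
      (lca.l1 a l * O1 v) ⊗ₜ[k]
        ((rca.r0 (lca.l0 a l) r * O2 v) ⊗ₜ[k] (rca.r1 (lca.l0 a l) r * O3 v))
  bca2 :
    ∑ v ∈ range nO, ∑ v' ∈ range nO, ∑ l ∈ range lca.nL, ∑ j ∈ range lca.nP,
      (O1 v' * lca.P1 j) ⊗ₜ[k] ((O1 v * lca.l1 (O2 v') l * lca.P2 j) ⊗ₜ[k]
        ((O2 v * lca.l0 (O2 v') l * lca.P3 j) ⊗ₜ[k] (O3 v * O3 v'))) =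
    ∑ j ∈ range lca.nP, ∑ v ∈ range nO, ∑ i ∈ range QB.nD, ∑ r ∈ range rca.nR,
      (lca.P1 j * QB.D1 (O1 v) i) ⊗ₜ[k] ((lca.P2 j * QB.D2 (O1 v) i) ⊗ₜ[k]
        ((rca.r0 (lca.P3 j) r * O2 v) ⊗ₜ[k] (rca.r1 (lca.P3 j) r * O3 v)))
  bca3 :
    ∑ s ∈ range rca.nP, ∑ v ∈ range nO, ∑ r ∈ range rca.nR, ∑ v' ∈ range nO,
      (O1 v * O1 v') ⊗ₜ[k] ((rca.P1 s * rca.r0 (O2 v) r * O2 v') ⊗ₜ[k]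
        ((rca.P2 s * rca.r1 (O2 v) r * O3 v') ⊗ₜ[k] (rca.P3 s * O3 v))) =
    ∑ v ∈ range nO, ∑ i ∈ range QB.nD, ∑ s ∈ range rca.nP, ∑ l ∈ range lca.nL,
      (O1 v * lca.l1 (rca.P1 s) l) ⊗ₜ[k] ((O2 v * lca.l0 (rca.P1 s) l) ⊗ₜ[k]
        ((QB.D1 (O3 v) i * rca.P2 s) ⊗ₜ[k] (QB.D2 (O3 v) i * rca.P3 s)))

/-- A two-sided two-cosided `(H, 𝔸, C)`-Hopf module. -/
structure TwoSidedTwoCosided {k : Type*} [Field k] {H : Type*} [Ring H] [Algebra k H]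
    (QB : QuasiBialgebra k H) {A : Type*} [Ring A] [Algebra k A]
    (BA : BicomoduleAlgebra QB A) {C : Type*} [AddCommGroup C] [Module k C]
    (lactC ractC : H →ₗ[k] C →ₗ[k] C) (DC : C →ₗ[k] C ⊗[k] C) (eC : C →ₗ[k] k)
    (N : Type*) [AddCommGroup N] [Module k N]
    extends TwoSidedHopfModule QB BA.rca N where
  rhoC : N →ₗ[k] C ⊗[k] N
  counit_rhoC : ∀ n,
    (TensorProduct.lid k N) ((TensorProduct.map eC LinearMap.id) (rhoC n)) = n
  tstc1 : ∀ n,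
    ∑ s ∈ range QB.nP,
      (TensorProduct.map (lactC (QB.X1 s))
        (TensorProduct.map (lactC (QB.X2 s)) (ha (QB.X3 s))))
        ((TensorProduct.assoc k C C N) ((TensorProduct.map DC LinearMap.id) (rhoC n))) =
    ∑ j ∈ range BA.lca.nP,
      (TensorProduct.map (ractC (BA.lca.P1 j))
        (TensorProduct.map (ractC (BA.lca.P2 j)) (ra (BA.lca.P3 j))))
        ((TensorProduct.map LinearMap.id rhoC) (rhoC n))
  tstc2 : ∀ n,
    ∑ s ∈ range QB.nP,
      (TensorProduct.map (lactC (QB.X1 s))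
        (TensorProduct.map (ha (QB.X2 s)) (LinearMap.mulLeft k (QB.X3 s))))
        ((TensorProduct.assoc k C N H) ((TensorProduct.map rhoC LinearMap.id) (rho n))) =
    ∑ v ∈ range BA.nO,
      (TensorProduct.map (ractC (BA.O1 v))
        (TensorProduct.map (ra (BA.O2 v)) (LinearMap.mulRight k (BA.O3 v))))
        ((TensorProduct.map LinearMap.id rho) (rhoC n))
  tstc3 : ∀ h n, rhoC (ha h n) =
    ∑ i ∈ range QB.nD,
      (TensorProduct.map (lactC (QB.D1 h i)) (ha (QB.D2 h i))) (rhoC n)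
  tstc4 : ∀ a n, rhoC (ra a n) =
    ∑ l ∈ range BA.lca.nL,
      (TensorProduct.map (ractC (BA.lca.l1 a l)) (ra (BA.lca.l0 a l))) (rhoC n)

section QuasiSmash

variable {k : Type*} [Field k] {H : Type*} [Ring H] [Algebra k H]
  {A : Type*} [Ring A] [Algebra k A]

lemma sum_rotate {α β γ M : Type*} [AddCommMonoid M] (s : Finset α) (t : Finset β) (u : Finset γ)
    (f : α → β → γ → M) :
    ∑ x ∈ s, ∑ y ∈ t, ∑ z ∈ u, f x y z = ∑ z ∈ u, ∑ x ∈ s, ∑ y ∈ t, f x y z := by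
  rw [sum_comm (s := u)]
  exact sum_congr rfl fun x _ => sum_comm

lemma sum_swap_pairs {α β γ δ M : Type*} [AddCommMonoid M] (s : Finset α) (t : Finset β)
    (u : Finset γ) (v : Finset δ) (f : α → β → γ → δ → M) :
    ∑ x ∈ s, ∑ y ∈ t, ∑ z ∈ u, ∑ w ∈ v, f x y z w =
      ∑ z ∈ u, ∑ w ∈ v, ∑ x ∈ s, ∑ y ∈ t, f x y z w := by
  rw [sum_rotate u v s]
  exact sum_congr rfl fun x _ => (sum_rotate u v t fun z w y => f x y z w).symm

lemma sum_swap_ends {α β γ δ M : Type*} [AddCommMonoid M] (s : Finset α) (t : Finset β)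
    (u : Finset γ) (v : Finset δ) (f : α → β → γ → δ → M) :
    ∑ x ∈ s, ∑ y ∈ t, ∑ z ∈ u, ∑ w ∈ v, f x y z w =
      ∑ w ∈ v, ∑ y ∈ t, ∑ z ∈ u, ∑ x ∈ s, f x y z w := by
  rw [sum_congr rfl fun x _ => sum_rotate t u v (f x), sum_comm]
  exact sum_congr rfl fun w _ => (sum_rotate t u s fun y z x => f x y z w).symm

/-- Shortcut instance: the generic search is too deep for a fourfold tensor product. -/
local instance instRingTensorFour : Ring (A ⊗[k] (H ⊗[k] (H ⊗[k] H))) :=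
  Algebra.TensorProduct.instRing

/-- Contraction of the second tensor factor against a functional. -/
def contract (A : Type*) [Ring A] [Algebra k A] {V : Type*} [AddCommGroup V] [Module k V]
    (φ : Module.Dual k V) : A ⊗[k] V →ₗ[k] A :=
  (TensorProduct.rid k A).toLinearMap ∘ₗ LinearMap.lTensor A φ

@[simp]
lemma contract_tmul {V : Type*} [AddCommGroup V] [Module k V]
    (φ : Module.Dual k V) (a : A) (v : V) : contract A φ (a ⊗ₜ v) = φ v • a := by
  simp [contract]

/-- The functional `φ ⊗ ψ`. -/
def dualTensor {V W : Type*} [AddCommGroup V] [Module k V] [AddCommGroup W] [Module k W]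
    (φ : Module.Dual k V) (ψ : Module.Dual k W) : Module.Dual k (V ⊗[k] W) :=
  TensorProduct.dualDistrib k V W (φ ⊗ₜ ψ)

@[simp]
lemma dualTensor_tmul {V W : Type*} [AddCommGroup V] [Module k V] [AddCommGroup W] [Module k W]
    (φ : Module.Dual k V) (ψ : Module.Dual k W) (v : V) (w : W) :
    dualTensor φ ψ (v ⊗ₜ w) = φ v * ψ w := by
  simp [dualTensor]

/-- Evaluation of an element of `A ⊗ H^*` at a point of `H`. -/
def evalAt (A : Type*) [Ring A] [Algebra k A] (h : H) : A ⊗[k] Module.Dual k H →ₗ[k] A :=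
  contract A (Module.Dual.eval k H h)

@[simp]
lemma evalAt_tmul (h : H) (a : A) (φ : Module.Dual k H) : evalAt A h (a ⊗ₜ φ) = φ h • a := by
  simp [evalAt]

lemma ext_evalAt [FiniteDimensional k H] {u v : A ⊗[k] Module.Dual k H}
    (huv : ∀ h, evalAt A h u = evalAt A h v) : u = v := by
  have key : ∀ (w : A ⊗[k] Module.Dual k H) (h : H),
      dualTensorHomEquiv k H A (TensorProduct.comm k _ _ w) h = evalAt A h w := by
    intro w h
    induction w with
    | zero => simp
    | add x y hx hy => simp only [map_add, LinearMap.add_apply, hx, hy]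
    | tmul a φ => simp
  apply (TensorProduct.comm k _ _).injective
  apply (dualTensorHomEquiv k H A).injective
  ext h
  rw [key, key, huv]

/-- The action `φ ↼ h` as a linear map on `H ⊗ H^*`. -/
def leftTranslate (k H : Type*) [Field k] [Ring H] [Algebra k H] :
    H ⊗[k] Module.Dual k H →ₗ[k] Module.Dual k H :=
  TensorProduct.lift ((LinearMap.llcomp k H H k).flip ∘ₗ LinearMap.mul k H)

@[simp]
lemma leftTranslate_tmul (h : H) (φ : Module.Dual k H) :
    leftTranslate k H (h ⊗ₜ φ) = lA k h φ := by
  ext; simp [leftTranslate, lA]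

@[simp]
lemma lA_apply (h g : H) (φ : Module.Dual k H) : lA k h φ g = φ (h * g) := by
  simp [lA]

@[simp]
lemma rA_apply (h g : H) (φ : Module.Dual k H) : rA k h φ g = φ (g * h) := by
  simp [rA]

/-- The action `h ⇀ φ` as a bilinear map. -/
def rightTranslate (k H : Type*) [Field k] [Ring H] [Algebra k H] :
    H →ₗ[k] Module.Dual k H →ₗ[k] Module.Dual k H :=
  (LinearMap.llcomp k H H k).flip ∘ₗ (LinearMap.mul k H).flip

@[simp]
lemma rightTranslate_apply (h : H) : rightTranslate k H h = rA k h := by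
  ext; simp [rightTranslate]

lemma convC_apply (D : H →ₗ[k] H ⊗[k] H) (φ ψ : Module.Dual k H) (h : H) :
    convC D φ ψ h = dualTensor φ ψ (D h) := by
  simp only [convC, LinearMap.comp_apply]
  induction D h with
  | zero => simp
  | add x y hx hy => simp only [map_add, hx, hy]
  | tmul a b => simp

/-- `f ⊗ id` followed by reassociation. -/
def mapFirst {A H : Type*} [Ring A] [Algebra k A] [Ring H] [Algebra k H] (f : A →ₐ[k] A ⊗[k] H)
    (B : Type*) [Ring B] [Algebra k B] : A ⊗[k] B →ₐ[k] A ⊗[k] (H ⊗[k] B) :=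
  (Algebra.TensorProduct.assoc k k k A H B).toAlgHom.comp
    (Algebra.TensorProduct.map f (AlgHom.id k B))

lemma mapFirst_tmul (f : A →ₐ[k] A ⊗[k] H) (B : Type*) [Ring B] [Algebra k B] (a : A) (b : B) :
    mapFirst f B (a ⊗ₜ b) = TensorProduct.assoc k A H B (f a ⊗ₜ b) := by
  simp [mapFirst]; rfl

namespace QuasiBialgebra

variable (QB : QuasiBialgebra k H)

/-- The reassociator. -/
def Phi : H ⊗[k] (H ⊗[k] H) :=
  ∑ s ∈ range QB.nP, QB.X1 s ⊗ₜ (QB.X2 s ⊗ₜ QB.X3 s)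

/-- The inverse of the reassociator. -/
def PhiInv : H ⊗[k] (H ⊗[k] H) :=
  ∑ s ∈ range QB.nQ, QB.x1 s ⊗ₜ (QB.x2 s ⊗ₜ QB.x3 s)

/-- `Δ ⊗ id` followed by reassociation. -/
def comulLeft : H ⊗[k] H →ₐ[k] H ⊗[k] (H ⊗[k] H) :=
  mapFirst QB.comul H

lemma comulLeft_tmul (g g' : H) :
    QB.comulLeft (g ⊗ₜ g') = TensorProduct.assoc k H H H (QB.comul g ⊗ₜ g') :=
  mapFirst_tmul _ _ _ _

/-- `id ⊗ Δ`. -/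
def comulRight : H ⊗[k] H →ₐ[k] H ⊗[k] (H ⊗[k] H) :=
  Algebra.TensorProduct.map (AlgHom.id k H) QB.comul

lemma PhiInv_mul_Phi : QB.PhiInv * QB.Phi = 1 := by
  simpa [Phi, PhiInv, sum_mul_sum, Algebra.TensorProduct.one_def] using QB.inv_P

lemma comulRight_comul_mul_Phi (h : H) :
    QB.comulRight (QB.comul h) * QB.Phi = QB.Phi * QB.comulLeft (QB.comul h) := by
  have key : QB.comulRight (QB.comul h) =
      QB.Phi * QB.comulLeft (QB.comul h) * QB.PhiInv := by
    have h1 := QB.coassoc h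
    simp only [comulRight, comulLeft_tmul, QB.hcomul, Phi, PhiInv, map_sum, tmul_sum, sum_tmul,
      sum_mul, mul_sum, Algebra.TensorProduct.map_tmul, AlgHom.coe_id, id_eq,
      TensorProduct.assoc_tmul, Algebra.TensorProduct.tmul_mul_tmul] at h1 ⊢
    exact h1.trans (sum_swap_ends _ _ _ _ _)
  rw [key, mul_assoc, PhiInv_mul_Phi, mul_one]

/-- The convolution product as a linear map on `H^* ⊗ H^*`. -/
def conv : Module.Dual k H ⊗[k] Module.Dual k H →ₗ[k] Module.Dual k H :=
  QB.comul.toLinearMap.dualMap ∘ₗ TensorProduct.dualDistrib k H H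

@[simp]
lemma conv_tmul (φ ψ : Module.Dual k H) :
    QB.conv (φ ⊗ₜ ψ) = convC QB.comul.toLinearMap φ ψ := by
  ext h
  rw [convC_apply]; rfl

/-- The map `s¹ ⊗ s² ⊗ s³, φ ⊗ ψ ↦ s¹ ⊗ (φ ↼ s²)(ψ ↼ s³)`. -/
def twistedConv (A : Type*) [Ring A] [Algebra k A] :
    (A ⊗[k] (H ⊗[k] H)) ⊗[k] (Module.Dual k H ⊗[k] Module.Dual k H) →ₗ[k]
      A ⊗[k] Module.Dual k H :=
  LinearMap.lTensor A (QB.conv ∘ₗ TensorProduct.map (leftTranslate k H) (leftTranslate k H) ∘ₗ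
    (TensorProduct.tensorTensorTensorComm k H H _ _).toLinearMap) ∘ₗ
    (TensorProduct.assoc k A (H ⊗[k] H) _).toLinearMap

@[simp]
lemma twistedConv_tmul (z : A) (g g' : H) (φ ψ : Module.Dual k H) :
    QB.twistedConv A ((z ⊗ₜ (g ⊗ₜ g')) ⊗ₜ (φ ⊗ₜ ψ)) =
      z ⊗ₜ convC QB.comul.toLinearMap (lA k g φ) (lA k g' ψ) := by
  simp [twistedConv]

lemma evalAt_twistedConv (t : A ⊗[k] (H ⊗[k] H)) (φ ψ : Module.Dual k H) (h : H) :
    evalAt A h (QB.twistedConv A (t ⊗ₜ (φ ⊗ₜ ψ))) =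
      contract A (dualTensor φ ψ) (t * (1 ⊗ₜ QB.comul h)) := by
  induction t with
  | zero => simp
  | add x y hx hy => simp only [map_add, add_tmul, add_mul, hx, hy]
  | tmul z g =>
    induction g with
    | zero => simp
    | add x y hx hy => simp only [map_add, tmul_add, add_tmul, add_mul, hx, hy]
    | tmul g g' =>
      rw [twistedConv_tmul, evalAt_tmul, convC_apply, AlgHom.toLinearMap_apply,
        Algebra.TensorProduct.tmul_mul_tmul, contract_tmul, mul_one]
      congr 1
      induction QB.comul h with
      | zero => simp
      | add x y hx hy => simp only [map_add, mul_add, hx, hy]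
      | tmul a b => simp

end QuasiBialgebra

namespace RightComoduleAlgebra

variable {QB : QuasiBialgebra k H} (CA : RightComoduleAlgebra QB A)

/-- The element `Φ_ρ`. -/
def Phi : A ⊗[k] (H ⊗[k] H) :=
  ∑ s ∈ range CA.nP, CA.P1 s ⊗ₜ (CA.P2 s ⊗ₜ CA.P3 s)

/-- The inverse of `Φ_ρ`. -/
def PhiInv : A ⊗[k] (H ⊗[k] H) :=
  ∑ s ∈ range CA.nQ, CA.Q1 s ⊗ₜ (CA.Q2 s ⊗ₜ CA.Q3 s)

lemma PhiInv_mul_Phi : CA.PhiInv * CA.Phi = 1 := by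
  simpa [Phi, PhiInv, sum_mul_sum, Algebra.TensorProduct.one_def] using CA.inv_P

lemma Phi_mul_PhiInv : CA.Phi * CA.PhiInv = 1 := by
  simpa [Phi, PhiInv, sum_mul_sum, Algebra.TensorProduct.one_def] using CA.P_inv

/-- `ρ ⊗ id` followed by reassociation. -/
def rhoFirst (B : Type*) [Ring B] [Algebra k B] : A ⊗[k] B →ₐ[k] A ⊗[k] (H ⊗[k] B) :=
  mapFirst CA.rho B

lemma rhoFirst_tmul (B : Type*) [Ring B] [Algebra k B] (a : A) (b : B) :
    CA.rhoFirst B (a ⊗ₜ b) = TensorProduct.assoc k A H B (CA.rho a ⊗ₜ b) :=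
  mapFirst_tmul _ _ _ _

end RightComoduleAlgebra

/-- `a ⊗ g ↦ a ⊗ (g ⊗ 1)`. -/
def appendOne (k A H B : Type*) [Field k] [Ring A] [Algebra k A] [Ring H] [Algebra k H]
    [Ring B] [Algebra k B] : A ⊗[k] H →ₐ[k] A ⊗[k] (H ⊗[k] B) :=
  Algebra.TensorProduct.map (AlgHom.id k A) Algebra.TensorProduct.includeLeft

/-- `a ⊗ (g ⊗ g') ↦ a ⊗ (g ⊗ (g' ⊗ 1))`. -/
def appendOneLast (k A H : Type*) [Field k] [Ring A] [Algebra k A] [Ring H] [Algebra k H] :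
    A ⊗[k] (H ⊗[k] H) →ₐ[k] A ⊗[k] (H ⊗[k] (H ⊗[k] H)) :=
  Algebra.TensorProduct.map (AlgHom.id k A) (appendOne k H H H)

namespace RightComoduleAlgebra

variable {QB : QuasiBialgebra k H} (CA : RightComoduleAlgebra QB A)

lemma rhoFirst_appendOne (x : A ⊗[k] H) :
    CA.rhoFirst (H ⊗[k] H) (appendOne k A H H x) = appendOneLast k A H (CA.rhoFirst H x) := by
  induction x with
  | zero => simp
  | add x y hx hy => simp only [map_add, hx, hy]
  | tmul a g =>
    simp only [appendOne, appendOneLast, rhoFirst_tmul,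
      Algebra.TensorProduct.map_tmul, AlgHom.coe_id, id_eq]
    induction CA.rho a with
    | zero => simp
    | add x y hx hy => simp only [add_tmul, map_add, hx, hy]
    | tmul a g => simp

lemma rhoFirst_tmul_one (b : A) :
    CA.rhoFirst (H ⊗[k] H) (b ⊗ₜ 1) = appendOne k A H (H ⊗[k] H) (CA.rho b) := by
  rw [rhoFirst_tmul]
  induction CA.rho b with
  | zero => simp
  | add x y hx hy => simp only [add_tmul, map_add, hx, hy]
  | tmul a g => simp [appendOne]

lemma comulMid_appendOne (x : A ⊗[k] H) :
    Algebra.TensorProduct.map (AlgHom.id k A) QB.comulLeft (appendOne k A H H x) =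
      appendOneLast k A H (Algebra.TensorProduct.map (AlgHom.id k A) QB.comul x) := by
  induction x with
  | zero => simp
  | add x y hx hy => simp only [map_add, hx, hy]
  | tmul a g =>
    simp only [appendOne, appendOneLast, Algebra.TensorProduct.map_tmul, AlgHom.coe_id, id_eq,
      Algebra.TensorProduct.includeLeft_apply, QuasiBialgebra.comulLeft_tmul]
    congr 1
    induction QB.comul g with
    | zero => simp
    | add x y hx hy => simp only [add_tmul, map_add, hx, hy]
    | tmul a g => simp

lemma appendOneLast_appendOne (x : A ⊗[k] H) :
    appendOneLast k A H (appendOne k A H H x) = appendOne k A H (H ⊗[k] H) x := by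
  induction x with
  | zero => simp
  | add x y hx hy => simp only [map_add, hx, hy]
  | tmul a g => simp [appendOne, appendOneLast, Algebra.TensorProduct.one_def]

lemma Phi_mul_rhoFirst (a : A) :
    CA.Phi * CA.rhoFirst H (CA.rho a) =
      Algebra.TensorProduct.map (AlgHom.id k A) QB.comul (CA.rho a) * CA.Phi := by
  have h1 := CA.rca1 a
  simp only [rhoFirst_tmul, Phi, CA.hrho, QB.hcomul, map_sum, tmul_sum, sum_tmul,
    sum_mul, mul_sum, Algebra.TensorProduct.map_tmul, AlgHom.coe_id, id_eq,
    TensorProduct.assoc_tmul, Algebra.TensorProduct.tmul_mul_tmul] at h1 ⊢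
  exact (sum_rotate _ _ _ _).trans (h1.trans (sum_rotate _ _ _ _))

lemma pentagon :
    (1 ⊗ₜ QB.Phi) * Algebra.TensorProduct.map (AlgHom.id k A) QB.comulLeft CA.Phi *
        appendOneLast k A H CA.Phi =
      Algebra.TensorProduct.map (AlgHom.id k A) QB.comulRight CA.Phi *
        CA.rhoFirst (H ⊗[k] H) CA.Phi := by
  have h1 := CA.rca2
  simp only [rhoFirst_tmul, Phi, QuasiBialgebra.Phi, CA.hrho, QB.hcomul, map_sum, tmul_sum,
    sum_tmul, QuasiBialgebra.comulLeft_tmul, QuasiBialgebra.comulRight, appendOneLast, appendOne,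
    sum_mul, mul_sum, Algebra.TensorProduct.map_tmul, AlgHom.coe_id, id_eq,
    Algebra.TensorProduct.includeLeft_apply, one_mul, mul_one,
    TensorProduct.assoc_tmul, Algebra.TensorProduct.tmul_mul_tmul] at h1 ⊢
  exact (sum_swap_ends _ _ _ _ _).trans (h1.trans (sum_swap_pairs _ _ _ _ _))

lemma PhiInv_mul_comul (a : A) :
    CA.PhiInv * Algebra.TensorProduct.map (AlgHom.id k A) QB.comul (CA.rho a) =
      CA.rhoFirst H (CA.rho a) * CA.PhiInv := by
  calc _ = CA.PhiInv * (Algebra.TensorProduct.map (AlgHom.id k A) QB.comul (CA.rho a) *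
        CA.Phi) * CA.PhiInv := by
        rw [mul_assoc, mul_assoc, Phi_mul_PhiInv, mul_one]
    _ = _ := by rw [← Phi_mul_rhoFirst, ← mul_assoc, PhiInv_mul_Phi, one_mul]

lemma pentagon_inv :
    CA.rhoFirst (H ⊗[k] H) CA.PhiInv *
        Algebra.TensorProduct.map (AlgHom.id k A) QB.comulRight CA.PhiInv * (1 ⊗ₜ QB.Phi) =
      appendOneLast k A H CA.PhiInv *
        Algebra.TensorProduct.map (AlgHom.id k A) QB.comulLeft CA.PhiInv := by
  have e1 : Algebra.TensorProduct.map (AlgHom.id k A) QB.comulLeft CA.Phi *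
      Algebra.TensorProduct.map (AlgHom.id k A) QB.comulLeft CA.PhiInv = 1 := by
    rw [← map_mul, Phi_mul_PhiInv, map_one]
  have e2 : appendOneLast k A H CA.Phi * appendOneLast k A H CA.PhiInv = 1 := by
    rw [← map_mul, Phi_mul_PhiInv, map_one]
  have e3 : Algebra.TensorProduct.map (AlgHom.id k A) QB.comulRight CA.PhiInv *
      Algebra.TensorProduct.map (AlgHom.id k A) QB.comulRight CA.Phi = 1 := by
    rw [← map_mul, PhiInv_mul_Phi, map_one]
  have e4 : CA.rhoFirst (H ⊗[k] H) CA.PhiInv * CA.rhoFirst (H ⊗[k] H) CA.Phi = 1 := by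
    rw [← map_mul, PhiInv_mul_Phi, map_one]
  have h := CA.pentagon
  generalize Algebra.TensorProduct.map (AlgHom.id k A) QB.comulLeft CA.Phi = m at *
  generalize Algebra.TensorProduct.map (AlgHom.id k A) QB.comulLeft CA.PhiInv = m' at *
  generalize appendOneLast k A H CA.Phi = o at *
  generalize appendOneLast k A H CA.PhiInv = o' at *
  generalize Algebra.TensorProduct.map (AlgHom.id k A) QB.comulRight CA.Phi = l at *
  generalize Algebra.TensorProduct.map (AlgHom.id k A) QB.comulRight CA.PhiInv = l' at *
  generalize CA.rhoFirst (H ⊗[k] H) CA.Phi = f at *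
  generalize CA.rhoFirst (H ⊗[k] H) CA.PhiInv = f' at *
  generalize (1 : A) ⊗ₜ[k] QB.Phi = x at *
  calc f' * l' * x = f' * l' * (x * (m * (o * o') * m')) := by rw [e2, mul_one, e1, mul_one]
    _ = f' * l' * (x * m * o) * o' * m' := by simp only [mul_assoc]
    _ = f' * (l' * l) * f * o' * m' := by rw [h]; simp only [mul_assoc]
    _ = o' * m' := by rw [e3, mul_one, e4, one_mul]

/-- The quasi-smash product multiplication on `A ⊗ H^*`. -/
def smashMul : A ⊗[k] Module.Dual k H →ₗ[k] A ⊗[k] Module.Dual k H →ₗ[k]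
    A ⊗[k] Module.Dual k H :=
  TensorProduct.curry (QB.twistedConv A ∘ₗ
    LinearMap.rTensor _ (LinearMap.mulRight k CA.PhiInv ∘ₗ
      LinearMap.mul' k (A ⊗[k] (H ⊗[k] H)) ∘ₗ
      TensorProduct.map Algebra.TensorProduct.includeLeft.toLinearMap
        ((appendOne k A H H).comp CA.rho).toLinearMap) ∘ₗ
    (TensorProduct.tensorTensorTensorComm k A _ A _).toLinearMap)

lemma smashMul_tmul (a b : A) (φ ψ : Module.Dual k H) :
    CA.smashMul (a ⊗ₜ φ) (b ⊗ₜ ψ) =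
      QB.twistedConv A (((a ⊗ₜ 1) * appendOne k A H H (CA.rho b) * CA.PhiInv) ⊗ₜ (φ ⊗ₜ ψ)) := by
  simp [smashMul]

lemma smashMul_tmul_eq_sum (a a' : A) (φ ψ : Module.Dual k H) :
    CA.smashMul (a ⊗ₜ[k] φ) (a' ⊗ₜ[k] ψ) =
      ∑ i ∈ range CA.nR, ∑ j ∈ range CA.nQ, (a * CA.r0 a' i * CA.Q1 j) ⊗ₜ[k]
        convC QB.comul.toLinearMap (lA k (CA.r1 a' i * CA.Q2 j) φ) (lA k (CA.Q3 j) ψ) := by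
  rw [smashMul_tmul]
  simp only [CA.hrho, PhiInv, map_sum, mul_sum, sum_mul, appendOne, sum_tmul,
    Algebra.TensorProduct.map_tmul, Algebra.TensorProduct.tmul_mul_tmul, AlgHom.coe_id, id_eq,
    Algebra.TensorProduct.includeLeft_apply, one_mul, QuasiBialgebra.twistedConv_tmul]
  exact sum_comm

/-- The left `H`-action on `A ⊗ H^*`. -/
def smashAct (k H A : Type*) [Field k] [Ring H] [Algebra k H] [Ring A] [Algebra k A] :
    H →ₗ[k] A ⊗[k] Module.Dual k H →ₗ[k] A ⊗[k] Module.Dual k H :=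
  LinearMap.lTensorHom A ∘ₗ rightTranslate k H

@[simp]
lemma smashAct_tmul (h : H) (a : A) (φ : Module.Dual k H) :
    smashAct k H A h (a ⊗ₜ φ) = a ⊗ₜ rA k h φ := by
  simp [smashAct]

lemma evalAt_smashMul_left (t : A ⊗[k] (H ⊗[k] H)) (c : A) (φ ψ χ : Module.Dual k H) (h : H) :
    evalAt A h (CA.smashMul (QB.twistedConv A (t ⊗ₜ (φ ⊗ₜ ψ))) (c ⊗ₜ χ)) =
      contract A (dualTensor φ (dualTensor ψ χ)) (appendOneLast k A H t *
        Algebra.TensorProduct.map (AlgHom.id k A) QB.comulLeft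
          (appendOne k A H H (CA.rho c) * CA.PhiInv * (1 ⊗ₜ QB.comul h))) := by
  induction t with
  | zero => simp
  | add x y hx hy => simp only [map_add, LinearMap.add_apply, add_tmul, add_mul, hx, hy]
  | tmul z g =>
  induction g with
  | zero => simp
  | add x y hx hy =>
    simp only [map_add, tmul_add, add_tmul, LinearMap.add_apply, add_mul, hx, hy]
  | tmul g g' =>
  rw [QuasiBialgebra.twistedConv_tmul, smashMul_tmul, QuasiBialgebra.evalAt_twistedConv]
  simp only [mul_assoc]
  generalize appendOne k A H H (CA.rho c) * (CA.PhiInv * (1 ⊗ₜ QB.comul h)) = s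
  induction s with
  | zero => simp
  | add x y hx hy => simp only [map_add, mul_add, hx, hy]
  | tmul y f =>
  induction f with
  | zero => simp
  | add x y hx hy => simp only [map_add, tmul_add, mul_add, hx, hy]
  | tmul f f' =>
  simp only [Algebra.TensorProduct.tmul_mul_tmul, one_mul, contract_tmul, dualTensor_tmul,
    convC_apply, AlgHom.toLinearMap_apply, Algebra.TensorProduct.map_tmul, AlgHom.coe_id, id_eq,
    appendOneLast, appendOne, QuasiBialgebra.comulLeft_tmul,
    Algebra.TensorProduct.includeLeft_apply]
  congr 1
  induction QB.comul f with
  | zero => simp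
  | add x y hx hy => simp only [map_add, add_tmul, mul_add, add_mul, hx, hy]
  | tmul a b => simp [mul_assoc]

lemma evalAt_smashMul_right (s : A ⊗[k] (H ⊗[k] H)) (a : A) (φ ψ χ : Module.Dual k H) (h : H) :
    evalAt A h (CA.smashMul (a ⊗ₜ φ) (QB.twistedConv A (s ⊗ₜ (ψ ⊗ₜ χ)))) =
      contract A (dualTensor φ (dualTensor ψ χ)) ((a ⊗ₜ 1) * CA.rhoFirst (H ⊗[k] H) s *
        Algebra.TensorProduct.map (AlgHom.id k A) QB.comulRight
          (CA.PhiInv * (1 ⊗ₜ QB.comul h))) := by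
  induction s with
  | zero => simp
  | add x y hx hy => simp only [map_add, add_tmul, add_mul, mul_add, hx, hy]
  | tmul y g =>
  induction g with
  | zero => simp
  | add x y hx hy =>
    simp only [map_add, tmul_add, add_tmul, add_mul, mul_add, hx, hy]
  | tmul g g' =>
  rw [QuasiBialgebra.twistedConv_tmul, smashMul_tmul, QuasiBialgebra.evalAt_twistedConv]
  rw [mul_assoc _ CA.PhiInv]
  generalize CA.PhiInv * (1 ⊗ₜ QB.comul h) = t
  rw [rhoFirst_tmul]
  induction t with
  | zero => simp
  | add x y hx hy => simp only [map_add, mul_add, hx, hy]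
  | tmul z f =>
  induction f with
  | zero => simp
  | add x y hx hy => simp only [map_add, tmul_add, mul_add, hx, hy]
  | tmul f f' =>
  induction CA.rho y with
  | zero => simp
  | add x y hx hy => simp only [map_add, add_tmul, mul_add, add_mul, hx, hy]
  | tmul c c' =>
  simp only [Algebra.TensorProduct.tmul_mul_tmul, one_mul, contract_tmul, dualTensor_tmul,
    convC_apply, AlgHom.toLinearMap_apply, Algebra.TensorProduct.map_tmul, AlgHom.coe_id, id_eq,
    appendOne, QuasiBialgebra.comulRight, TensorProduct.assoc_tmul,
    Algebra.TensorProduct.includeLeft_apply]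
  congr 2
  induction QB.comul f' with
  | zero => simp
  | add x y hx hy => simp only [map_add, mul_add, hx, hy]
  | tmul a b => simp

lemma contract_rA (T : A ⊗[k] (H ⊗[k] H)) (φ ψ : Module.Dual k H) (g g' : H) :
    contract A (dualTensor (rA k g φ) (rA k g' ψ)) T =
      contract A (dualTensor φ ψ) (T * (1 ⊗ₜ (g ⊗ₜ g'))) := by
  induction T with
  | zero => simp
  | add x y hx hy => simp only [map_add, add_mul, hx, hy]
  | tmul z f =>
  induction f with
  | zero => simp
  | add x y hx hy => simp only [map_add, tmul_add, add_mul, hx, hy]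
  | tmul f f' => simp

lemma contract_rA₃ (T : A ⊗[k] (H ⊗[k] (H ⊗[k] H))) (φ ψ χ : Module.Dual k H) (g g' g'' : H) :
    contract A (dualTensor (rA k g φ) (dualTensor (rA k g' ψ) (rA k g'' χ))) T =
      contract A (dualTensor φ (dualTensor ψ χ)) (T * (1 ⊗ₜ (g ⊗ₜ (g' ⊗ₜ g'')))) := by
  induction T with
  | zero => simp
  | add x y hx hy => simp only [map_add, add_mul, hx, hy]
  | tmul z f =>
  induction f with
  | zero => simp
  | add x y hx hy => simp only [map_add, tmul_add, add_mul, hx, hy]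
  | tmul f f' =>
  induction f' with
  | zero => simp
  | add x y hx hy => simp only [map_add, tmul_add, add_mul, hx, hy]
  | tmul f' f'' => simp

lemma appendOneLast_mul_comulLeft (a b c : A) (h : H) :
    appendOneLast k A H ((a ⊗ₜ 1) * appendOne k A H H (CA.rho b) * CA.PhiInv) *
        Algebra.TensorProduct.map (AlgHom.id k A) QB.comulLeft
          (appendOne k A H H (CA.rho c) * CA.PhiInv * (1 ⊗ₜ QB.comul h)) =
      (a ⊗ₜ 1) * CA.rhoFirst (H ⊗[k] H) ((b ⊗ₜ 1) * appendOne k A H H (CA.rho c) * CA.PhiInv) *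
        Algebra.TensorProduct.map (AlgHom.id k A) QB.comulRight
          (CA.PhiInv * (1 ⊗ₜ QB.comul h)) * (1 ⊗ₜ QB.Phi) := by
  have e1 : appendOneLast k A H (a ⊗ₜ 1) = a ⊗ₜ 1 := by simp [appendOneLast]
  have e2 : appendOneLast k A H CA.PhiInv * appendOneLast k A H
      (Algebra.TensorProduct.map (AlgHom.id k A) QB.comul (CA.rho c)) =
      appendOneLast k A H (CA.rhoFirst H (CA.rho c)) * appendOneLast k A H CA.PhiInv := by
    rw [← map_mul, PhiInv_mul_comul, map_mul]
  have e3 : Algebra.TensorProduct.map (AlgHom.id k A) QB.comulRight (1 ⊗ₜ QB.comul h) *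
      (1 ⊗ₜ QB.Phi) =
      (1 ⊗ₜ QB.Phi) * Algebra.TensorProduct.map (AlgHom.id k A) QB.comulLeft
        (1 ⊗ₜ QB.comul h) := by
    simp only [Algebra.TensorProduct.map_tmul, Algebra.TensorProduct.tmul_mul_tmul,
      QB.comulRight_comul_mul_Phi, map_one, mul_one]
  have e4 := CA.pentagon_inv
  simp only [map_mul, e1, appendOneLast_appendOne, comulMid_appendOne, rhoFirst_tmul_one,
    rhoFirst_appendOne]
  generalize appendOneLast k A H CA.PhiInv = o at *
  generalize appendOneLast k A H
      (Algebra.TensorProduct.map (AlgHom.id k A) QB.comul (CA.rho c)) = d at *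
  generalize appendOneLast k A H (CA.rhoFirst H (CA.rho c)) = r at *
  generalize Algebra.TensorProduct.map (AlgHom.id k A) QB.comulLeft CA.PhiInv = m at *
  generalize Algebra.TensorProduct.map (AlgHom.id k A) QB.comulRight CA.PhiInv = l at *
  generalize CA.rhoFirst (H ⊗[k] H) CA.PhiInv = f at *
  generalize Algebra.TensorProduct.map (AlgHom.id k A) QB.comulRight (1 ⊗ₜ QB.comul h) = y at *
  generalize Algebra.TensorProduct.map (AlgHom.id k A) QB.comulLeft (1 ⊗ₜ QB.comul h) = z at *
  generalize (1 : A) ⊗ₜ[k] QB.Phi = x at *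
  generalize a ⊗ₜ[k] (1 : H ⊗[k] (H ⊗[k] H)) = p at *
  generalize appendOne k A H (H ⊗[k] H) (CA.rho b) = q at *
  calc p * q * o * (d * m * z) = p * q * (o * d) * m * z := by simp only [mul_assoc]
    _ = p * q * r * (o * m) * z := by rw [e2]; simp only [mul_assoc]
    _ = p * q * r * f * l * (x * z) := by rw [← e4]; simp only [mul_assoc]
    _ = p * (q * r * f) * (l * y) * x := by rw [← e3]; simp only [mul_assoc]

lemma smashMul_assoc [FiniteDimensional k H] (u v w : A ⊗[k] Module.Dual k H) :
    CA.smashMul (CA.smashMul u v) w =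
      ∑ s ∈ range QB.nP, CA.smashMul (smashAct k H A (QB.X1 s) u)
        (CA.smashMul (smashAct k H A (QB.X2 s) v) (smashAct k H A (QB.X3 s) w)) := by
  induction u with
  | zero => simp
  | add x y hx hy => simp only [map_add, LinearMap.add_apply, hx, hy, sum_add_distrib]
  | tmul a φ =>
  induction v with
  | zero => simp
  | add x y hx hy => simp only [map_add, LinearMap.add_apply, hx, hy, sum_add_distrib]
  | tmul b ψ =>
  induction w with
  | zero => simp
  | add x y hx hy => simp only [map_add, hx, hy, sum_add_distrib]
  | tmul c χ =>
  refine ext_evalAt fun h => ?_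
  simp only [smashAct_tmul, smashMul_tmul CA a b, smashMul_tmul CA b c, map_sum,
    evalAt_smashMul_left, evalAt_smashMul_right, contract_rA₃]
  rw [appendOneLast_mul_comulLeft, ← map_sum, ← mul_sum, ← tmul_sum]
  rfl

lemma evalAt_smashAct (g h : H) (u : A ⊗[k] Module.Dual k H) :
    evalAt A g (smashAct k H A h u) = evalAt A (g * h) u := by
  induction u with
  | zero => simp
  | add x y hx hy => simp only [map_add, hx, hy]
  | tmul a φ => simp

lemma smashAct_smashMul [FiniteDimensional k H] (h : H) (u v : A ⊗[k] Module.Dual k H) :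
    smashAct k H A h (CA.smashMul u v) =
      ∑ i ∈ range QB.nD, CA.smashMul (smashAct k H A (QB.D1 h i) u)
        (smashAct k H A (QB.D2 h i) v) := by
  induction u with
  | zero => simp
  | add x y hx hy => simp only [map_add, LinearMap.add_apply, hx, hy, sum_add_distrib]
  | tmul a φ =>
  induction v with
  | zero => simp
  | add x y hx hy => simp only [map_add, hx, hy, sum_add_distrib]
  | tmul b ψ =>
  refine ext_evalAt fun g => ?_
  simp only [evalAt_smashAct, smashAct_tmul, smashMul_tmul, map_sum,
    QuasiBialgebra.evalAt_twistedConv, contract_rA]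
  rw [← map_sum, ← mul_sum, ← tmul_sum, ← QB.hcomul, map_mul QB.comul, mul_assoc _ (1 ⊗ₜ _),
    Algebra.TensorProduct.tmul_mul_tmul, mul_one]

/-- `id ⊗ ε ⊗ id`. -/
def counitMid (QB : QuasiBialgebra k H) (A : Type*) [Ring A] [Algebra k A] :
    A ⊗[k] (H ⊗[k] H) →ₐ[k] A ⊗[k] H :=
  Algebra.TensorProduct.map (AlgHom.id k A)
    ((Algebra.TensorProduct.lid k H).toAlgHom.comp
      (Algebra.TensorProduct.map QB.counit (AlgHom.id k H)))

@[simp]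
lemma counitMid_tmul (a : A) (g g' : H) :
    counitMid QB A (a ⊗ₜ (g ⊗ₜ g')) = QB.counit g • (a ⊗ₜ g') := by
  simp [counitMid]

/-- `id ⊗ id ⊗ ε`. -/
def counitLast (QB : QuasiBialgebra k H) (A : Type*) [Ring A] [Algebra k A] :
    A ⊗[k] (H ⊗[k] H) →ₐ[k] A ⊗[k] H :=
  Algebra.TensorProduct.map (AlgHom.id k A)
    ((Algebra.TensorProduct.rid k k H).toAlgHom.comp
      (Algebra.TensorProduct.map (AlgHom.id k H) QB.counit))

@[simp]
lemma counitLast_tmul (a : A) (g g' : H) :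
    counitLast QB A (a ⊗ₜ (g ⊗ₜ g')) = QB.counit g' • (a ⊗ₜ g) := by
  simp [counitLast]

lemma counitMid_PhiInv : counitMid QB A CA.PhiInv = 1 := by
  have h : counitMid QB A CA.Phi = 1 := by
    simpa [Phi, Algebra.TensorProduct.one_def] using CA.rca4a
  have h' := congrArg (counitMid QB A) CA.Phi_mul_PhiInv
  rwa [map_mul, h, one_mul, map_one] at h'

lemma counitLast_PhiInv : counitLast QB A CA.PhiInv = 1 := by
  have h : counitLast QB A CA.Phi = 1 := by
    simpa [Phi, Algebra.TensorProduct.one_def] using CA.rca4b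
  have h' := congrArg (counitLast QB A) CA.Phi_mul_PhiInv
  rwa [map_mul, h, one_mul, map_one] at h'

lemma counitMid_comul (h : H) : counitMid QB A (1 ⊗ₜ QB.comul h) = 1 ⊗ₜ h := by
  conv_rhs => rw [← QB.counit_l h]
  simp only [QB.hcomul, tmul_sum, map_sum, counitMid_tmul, tmul_smul]

lemma counitLast_comul (h : H) : counitLast QB A (1 ⊗ₜ QB.comul h) = 1 ⊗ₜ h := by
  conv_rhs => rw [← QB.counit_r h]
  simp only [QB.hcomul, tmul_sum, map_sum, counitLast_tmul, tmul_smul]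

lemma counitMid_appendOne_rho (b : A) :
    counitMid QB A (appendOne k A H H (CA.rho b)) = b ⊗ₜ 1 := by
  conv_rhs => rw [← CA.rca3 b]
  simp only [CA.hrho, map_sum, sum_tmul, appendOne, Algebra.TensorProduct.map_tmul,
    Algebra.TensorProduct.includeLeft_apply, counitMid_tmul, AlgHom.coe_id, id_eq, smul_tmul']

lemma contract_counit_left (t : A ⊗[k] (H ⊗[k] H)) (ψ : Module.Dual k H) :
    contract A (dualTensor QB.counit.toLinearMap ψ) t = contract A ψ (counitMid QB A t) := by
  induction t with
  | zero => simp
  | add x y hx hy => simp only [map_add, hx, hy]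
  | tmul z g =>
  induction g with
  | zero => simp
  | add x y hx hy => simp only [map_add, tmul_add, hx, hy]
  | tmul g g' => simp [mul_smul]

lemma contract_counit_right (t : A ⊗[k] (H ⊗[k] H)) (φ : Module.Dual k H) :
    contract A (dualTensor φ QB.counit.toLinearMap) t = contract A φ (counitLast QB A t) := by
  induction t with
  | zero => simp
  | add x y hx hy => simp only [map_add, hx, hy]
  | tmul z g =>
  induction g with
  | zero => simp
  | add x y hx hy => simp only [map_add, tmul_add, hx, hy]
  | tmul g g' => simp [mul_smul, smul_comm (φ g)]

lemma smashMul_one [FiniteDimensional k H] (u : A ⊗[k] Module.Dual k H) :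
    CA.smashMul u (1 ⊗ₜ QB.counit.toLinearMap) = u := by
  induction u with
  | zero => simp
  | add x y hx hy => simp only [map_add, LinearMap.add_apply, hx, hy]
  | tmul a φ =>
  refine ext_evalAt fun h => ?_
  have e : counitLast QB A (a ⊗ₜ 1) = a ⊗ₜ 1 := by
    rw [Algebra.TensorProduct.one_def, counitLast_tmul, map_one, one_smul]
  rw [smashMul_tmul, QuasiBialgebra.evalAt_twistedConv, contract_counit_right, map_one, map_one,
    mul_one, map_mul (counitLast QB A), map_mul (counitLast QB A), counitLast_PhiInv,
    counitLast_comul, mul_one, e]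
  simp

lemma one_smashMul [FiniteDimensional k H] (u : A ⊗[k] Module.Dual k H) :
    CA.smashMul (1 ⊗ₜ QB.counit.toLinearMap) u = u := by
  induction u with
  | zero => simp
  | add x y hx hy => simp only [map_add, hx, hy]
  | tmul b ψ =>
  refine ext_evalAt fun h => ?_
  rw [smashMul_tmul, QuasiBialgebra.evalAt_twistedConv, contract_counit_left,
    ← Algebra.TensorProduct.one_def, one_mul, map_mul (counitMid QB A), map_mul (counitMid QB A),
    counitMid_PhiInv, counitMid_comul, counitMid_appendOne_rho, mul_one]
  simp

lemma smashAct_one (u : A ⊗[k] Module.Dual k H) : smashAct k H A 1 u = u := by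
  have h : rightTranslate k H 1 = LinearMap.id := by ext; simp
  simp [smashAct, h]

lemma smashAct_mul (g h : H) (u : A ⊗[k] Module.Dual k H) :
    smashAct k H A (g * h) u = smashAct k H A g (smashAct k H A h u) := by
  induction u with
  | zero => simp
  | add x y hx hy => simp only [map_add, hx, hy]
  | tmul a φ =>
    simp only [smashAct_tmul]
    congr 1
    ext; simp [mul_assoc]

lemma smashAct_counit (h : H) :
    smashAct k H A h (1 ⊗ₜ QB.counit.toLinearMap) =
      QB.counit h • ((1 : A) ⊗ₜ[k] QB.counit.toLinearMap) := by
  rw [smashAct_tmul, ← tmul_smul]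
  congr 1
  ext; simp [mul_comm]

end RightComoduleAlgebra

end QuasiSmash

/-- Let `H` be a finite dimensional quasi-bialgebra and `𝔄` a right
`H`-comodule algebra. Then `𝔄 ⊗ H^*`, with the quasi-smash product multiplication
`(a #̄ φ)(a' #̄ ψ) = ∑ a a'⟨0⟩ x̃¹ρ #̄ (φ ↼ a'⟨1⟩x̃²ρ)(ψ ↼ x̃³ρ)`, unit `1 #̄ ε`, and
left `H`-action `h·(a #̄ φ) = a #̄ (h ⇀ φ)`, is a left `H`-module algebra. -/
theorem quasi_smash_product_is_left_module_algebra
    {k : Type*} [Field k] {H : Type*} [Ring H] [Algebra k H] [FiniteDimensional k H]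
    (QB : QuasiBialgebra k H)
    {A : Type*} [Ring A] [Algebra k A] (CA : RightComoduleAlgebra QB A) :
    ∃ MA : LeftModuleAlgebra QB (A ⊗[k] Module.Dual k H),
      (∀ (a a' : A) (φ ψ : Module.Dual k H),
        MA.mul (a ⊗ₜ[k] φ) (a' ⊗ₜ[k] ψ) =
          ∑ i ∈ Finset.range CA.nR, ∑ j ∈ Finset.range CA.nQ,
            (a * CA.r0 a' i * CA.Q1 j) ⊗ₜ[k]
              convC QB.comul.toLinearMap
                (lA k (CA.r1 a' i * CA.Q2 j) φ) (lA k (CA.Q3 j) ψ)) ∧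
      MA.one = (1 : A) ⊗ₜ[k] (QB.counit.toLinearMap : Module.Dual k H) ∧
      (∀ (h : H) (a : A) (φ : Module.Dual k H),
        MA.act h (a ⊗ₜ[k] φ) = a ⊗ₜ[k] rA k h φ) := by
  exact ⟨{
    mul := CA.smashMul
    one := 1 ⊗ₜ QB.counit.toLinearMap
    act := RightComoduleAlgebra.smashAct k H A
    act_one := RightComoduleAlgebra.smashAct_one
    act_mul := RightComoduleAlgebra.smashAct_mul
    mul_one := CA.smashMul_one
    one_mul := CA.one_smashMul
    mul_assoc := CA.smashMul_assoc
    act_mul_mul := CA.smashAct_smashMul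
    act_unit := RightComoduleAlgebra.smashAct_counit },
    CA.smashMul_tmul_eq_sum, rfl, RightComoduleAlgebra.smashAct_tmul⟩
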